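/- Let ℓ be a loss function that is finite-valued and supermodular, i.e., ℓ(x ∨ y) + ℓ(x ∧ y) ≥ ℓ(x) + ℓ(y) for all x, y ∈ ℝ^d (with componentwise max and min). Let X, Y ∈ M^θ be such that X dominates Y in the supermodular order, i.e., E[f(X)] ≥ E[f(Y)] for every supermodular function f : ℝ^d → ℝ for which both expectations exist. Then A(X) ⊆ A(Y) and consequently R(Y) ≤ R(X). -/

import Mathlib

/-!
Write `ℓ x = f x` with `f` real-valued. For `X` in the Orlicz heart, `f (X - m)` is integrable:
`∑ₖ (Xₖ - mₖ) - c ≤ f (X - m) ≤ (f |2X| + f (-2m)) / 2` by the linear lower bound and by convexity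
with monotonicity, and both bounds are integrable because `∑ₖ |Xₖ| - c ≤ f |X|`
(`Heart.integrable_shift`). The extended expectation is then the Bochner integral
(`eexp_coe`), so applying the supermodular order to `x ↦ f (x - m)`, which is supermodular because
`⊔` and `⊓` commute with translations, gives `A(X) ⊆ A(Y)`.

The inequality between the risks is a comparison of infima of real sets, where `sInf` has junk
values, so two further facts are needed: `A(X)` is nonempty (`Heart.exists_integral_nonpos`:
dominated convergence for `max (f (X - n)) (f x₀)` as `n → ∞`, where `f x₀ < 0`), and the sums
`∑ₖ mₖ` over `A(Y)` are bounded below by `E[∑ₖ Yₖ] - c`.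
-/

open MeasureTheory ENNReal Pointwise

/-- The positive part of an extended real number, valued in `ℝ≥0∞`. -/
noncomputable def ERealPos (e : EReal) : ℝ≥0∞ := (max e 0).abs

/-- Extended expectation of a `(-∞,∞]`-valued integrand, as an extended real. -/
noncomputable def eexp {Ω : Type*} [MeasurableSpace Ω] (P : Measure Ω)
    (g : Ω → EReal) : EReal :=
  ((∫⁻ ω, ERealPos (g ω) ∂P) : EReal) - ((∫⁻ ω, ERealPos (-(g ω)) ∂P) : EReal)

/-- A loss function `ℓ : ℝ^d → (-∞,∞]` with constant `c` as in (A3):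
(A1) increasing, (A2) convex, lower semicontinuous with `inf ℓ < 0`,
(A3) `ℓ x ≥ ∑ₖ xₖ - c`. -/
structure IsLossFunction {d : ℕ} (ℓ : (Fin d → ℝ) → EReal) (c : ℝ) : Prop where
  mono : Monotone ℓ
  convex : ∀ x y : Fin d → ℝ, ∀ a b : ℝ, 0 ≤ a → 0 ≤ b → a + b = 1 →
    ℓ (a • x + b • y) ≤ (a : EReal) * ℓ x + (b : EReal) * ℓ y
  lsc : LowerSemicontinuous ℓ
  inf_lt_zero : (⨅ x, ℓ x) < 0
  lower_bound : ∀ x, ((∑ k, x k : ℝ) : EReal) - (c : EReal) ≤ ℓ x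

/-- Membership in the Orlicz heart `M^θ` where `θ x = ℓ |x|`:
`X` is measurable and `E[θ(λX)] < ∞` for all `λ > 0`. -/
def MemOrliczHeart {Ω : Type*} [MeasurableSpace Ω] {d : ℕ}
    (ℓ : (Fin d → ℝ) → EReal) (P : Measure Ω) (X : Ω → Fin d → ℝ) : Prop :=
  Measurable X ∧ ∀ lam : ℝ, 0 < lam → eexp P (fun ω => ℓ |lam • X ω|) < ⊤

/-- The acceptance set `A(X) = {m : E[ℓ(X - m)] ≤ 0}`. -/
def acceptSet {Ω : Type*} [MeasurableSpace Ω] {d : ℕ}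
    (ℓ : (Fin d → ℝ) → EReal) (P : Measure Ω) (X : Ω → Fin d → ℝ) : Set (Fin d → ℝ) :=
  {m | eexp P (fun ω => ℓ (X ω - m)) ≤ 0}

/-- The multivariate shortfall risk `R(X) = inf {∑ₖ mₖ : m ∈ A(X)}`. -/
noncomputable def shortfallRisk {Ω : Type*} [MeasurableSpace Ω] {d : ℕ}
    (ℓ : (Fin d → ℝ) → EReal) (P : Measure Ω) (X : Ω → Fin d → ℝ) : ℝ :=
  sInf {s : ℝ | ∃ m ∈ acceptSet ℓ P X, s = ∑ k, m k}

theorem ERealPos_coe (r : ℝ) : ERealPos (r : EReal) = ENNReal.ofReal r := by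
  have h : max (r : EReal) 0 = ((max r 0 : ℝ) : EReal) := by
    rw [EReal.coe_strictMono.monotone.map_max, EReal.coe_zero]
  rw [ERealPos, h, EReal.abs_def, abs_of_nonneg (le_max_right _ _)]
  rcases le_total r 0 with hr | hr
  · rw [max_eq_right hr, ENNReal.ofReal_of_nonpos hr, ENNReal.ofReal_zero]
  · rw [max_eq_left hr]

theorem eexp_coe_eq {Ω : Type*} [MeasurableSpace Ω] (P : Measure Ω) (g : Ω → ℝ) :
    eexp P (fun ω => (g ω : EReal)) =
      ((∫⁻ ω, ENNReal.ofReal (g ω) ∂P : ℝ≥0∞) : EReal)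
        - ((∫⁻ ω, ENNReal.ofReal (-g ω) ∂P : ℝ≥0∞) : EReal) := by
  simp only [eexp, ← EReal.coe_neg, ERealPos_coe]

theorem eexp_coe {Ω : Type*} [MeasurableSpace Ω] {P : Measure Ω} {g : Ω → ℝ}
    (hg : Integrable g P) :
    eexp P (fun ω => (g ω : EReal)) = ((∫ ω, g ω ∂P : ℝ) : EReal) := by
  have h1 : ∫⁻ ω, ENNReal.ofReal (g ω) ∂P ≠ ⊤ := hg.lintegral_lt_top.ne
  have h2 : ∫⁻ ω, ENNReal.ofReal (-g ω) ∂P ≠ ⊤ := hg.neg.lintegral_lt_top.ne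
  rw [eexp_coe_eq, integral_eq_lintegral_pos_part_sub_lintegral_neg_part hg, EReal.coe_sub,
    EReal.coe_ennreal_toReal h1, EReal.coe_ennreal_toReal h2]

/-- For an integrand bounded below, finiteness of the extended expectation means integrability.
The lower bound rules out the junk value `⊤ - ⊤ = ⊥`. -/
theorem integrable_of_eexp_lt_top {Ω : Type*} [MeasurableSpace Ω] {P : Measure Ω}
    [IsProbabilityMeasure P] {g : Ω → ℝ} (hm : Measurable g) {c : ℝ} (hc : ∀ ω, -c ≤ g ω)
    (h : eexp P (fun ω => (g ω : EReal)) < ⊤) : Integrable g P := by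
  have h2 : ∫⁻ ω, ENNReal.ofReal (-g ω) ∂P ≠ ⊤ := by
    refine ne_top_of_le_ne_top (b := ENNReal.ofReal c) ENNReal.ofReal_ne_top ?_
    calc _ ≤ ∫⁻ _, ENNReal.ofReal c ∂P :=
          lintegral_mono fun ω => ENNReal.ofReal_le_ofReal (by linarith [hc ω])
      _ = ENNReal.ofReal c := by simp
  have h1 : ∫⁻ ω, ENNReal.ofReal (g ω) ∂P ≠ ⊤ := by
    intro h1
    rw [eexp_coe_eq, h1, ← EReal.coe_ennreal_toReal h2, EReal.coe_ennreal_top,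
      EReal.top_sub_coe] at h
    exact lt_irrefl _ h
  refine ⟨hm.aestronglyMeasurable, ?_⟩
  have hn : ∀ ω, ‖g ω‖ₑ = ENNReal.ofReal (g ω) + ENNReal.ofReal (-g ω) := by
    intro ω
    rw [Real.enorm_eq_ofReal_abs]
    rcases le_total (g ω) 0 with hr | hr
    · rw [abs_of_nonpos hr, ENNReal.ofReal_of_nonpos hr, zero_add]
    · rw [abs_of_nonneg hr, ENNReal.ofReal_of_nonpos (neg_nonpos.2 hr), add_zero]
  rw [HasFiniteIntegral]
  simp only [hn]
  rw [lintegral_add_left (by fun_prop)]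
  exact ENNReal.add_lt_top.2 ⟨h1.lt_top, h2.lt_top⟩

/-- A real-valued function `f` and a random vector `X` with what a finite-valued loss function and
a member of its Orlicz heart provide: `f` is increasing, midpoint convex, measurable and bounded
below by `∑ₖ xₖ - c`, and every `f |lam • X|` with `lam > 0` is Bochner integrable. -/
structure Heart {Ω : Type*} [MeasurableSpace Ω] (P : Measure Ω) {d : ℕ}
    (f : (Fin d → ℝ) → ℝ) (c : ℝ) (X : Ω → Fin d → ℝ) : Prop where
  mono : Monotone f
  convex : ∀ x y : Fin d → ℝ, f ((1 / 2 : ℝ) • x + (1 / 2 : ℝ) • y) ≤ 1 / 2 * f x + 1 / 2 * f y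
  lower_bound : ∀ x, ∑ k, x k - c ≤ f x
  measurable_f : Measurable f
  measurable_X : Measurable X
  integrable_abs : ∀ lam : ℝ, 0 < lam → Integrable (fun ω => f |lam • X ω|) P

namespace Heart

variable {Ω : Type*} [MeasurableSpace Ω] {P : Measure Ω} [IsProbabilityMeasure P] {d : ℕ}
  {f : (Fin d → ℝ) → ℝ} {c : ℝ} {X : Ω → Fin d → ℝ}

theorem integrable_sum (h : Heart P f c X) : Integrable (fun ω => ∑ k, X ω k) P := by
  refine ((h.integrable_abs 1 one_pos).add (integrable_const c)).mono'
    (Finset.measurable_sum _ fun k _ =>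
      (measurable_pi_apply k).comp h.measurable_X).aestronglyMeasurable
    (Filter.Eventually.of_forall fun ω => ?_)
  have h1 := h.lower_bound |(1 : ℝ) • X ω|
  simp only [one_smul, Pi.abs_apply] at h1
  have h2 := Finset.abs_sum_le_sum_abs (fun k => X ω k) Finset.univ
  simp only [Real.norm_eq_abs, Pi.add_apply, one_smul]
  linarith

theorem integrable_shift (h : Heart P f c X) (m : Fin d → ℝ) :
    Integrable (fun ω => f (X ω - m)) P := by
  have hlo : Integrable (fun ω => ∑ k, X ω k - ∑ k, m k - c) P :=
    (h.integrable_sum.sub (integrable_const _)).sub (integrable_const _)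
  have hup : Integrable (fun ω => 1 / 2 * f |(2 : ℝ) • X ω| + 1 / 2 * f (-(2 : ℝ) • m)) P :=
    ((h.integrable_abs 2 two_pos).const_mul _).add (integrable_const _)
  refine integrable_of_le_of_le
    (h.measurable_f.comp (h.measurable_X.sub_const m)).aestronglyMeasurable
    (Filter.Eventually.of_forall fun ω => ?_) (Filter.Eventually.of_forall fun ω => ?_) hlo hup
  · have := h.lower_bound (X ω - m)
    simpa [Finset.sum_sub_distrib] using this
  · have h1 := h.convex ((2 : ℝ) • X ω) (-(2 : ℝ) • m)
    have h2 := h.mono (le_abs_self ((2 : ℝ) • X ω))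
    have h3 : (1 / 2 : ℝ) • ((2 : ℝ) • X ω) + (1 / 2 : ℝ) • (-(2 : ℝ) • m) = X ω - m := by
      ext k; simp; ring
    rw [h3] at h1
    show f (X ω - m) ≤ _
    linarith

/-- Some deterministic capital allocation makes the position acceptable. -/
theorem exists_integral_nonpos (h : Heart P f c X) {x₀ : Fin d → ℝ} (hx₀ : f x₀ < 0) :
    ∃ m : Fin d → ℝ, ∫ ω, f (X ω - m) ∂P ≤ 0 := by
  let m : ℕ → Fin d → ℝ := fun n _ => n
  have hlim : Filter.Tendsto (fun n => ∫ ω, max (f (X ω - m n)) (f x₀) ∂P) Filter.atTop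
      (nhds (∫ _, f x₀ ∂P)) := by
    -- The maximum with `f x₀` supplies a lower bound uniform in `n`.
    refine tendsto_integral_of_dominated_convergence
      (fun ω => |f (X ω - 0)| + |f x₀|)
      (fun n => ((h.integrable_shift (m n)).sup (integrable_const (f x₀))).aestronglyMeasurable)
      ((h.integrable_shift 0).abs.add (integrable_const _))
      (fun n => Filter.Eventually.of_forall fun ω => ?_)
      (Filter.Eventually.of_forall fun ω => ?_)
    · have h1 : f (X ω - m n) ≤ f (X ω - 0) :=
        h.mono (sub_le_sub_left (show (0 : Fin d → ℝ) ≤ m n from fun _ => Nat.cast_nonneg n) _)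
      rw [Real.norm_eq_abs, abs_le]
      have h2 := neg_abs_le (f x₀)
      have h3 := le_abs_self (f x₀)
      have h4 := le_abs_self (f (X ω - 0))
      have h5 := abs_nonneg (f (X ω - 0))
      have h6 := abs_nonneg (f x₀)
      exact ⟨by linarith [le_max_right (f (X ω - m n)) (f x₀)],
        max_le (by linarith) (by linarith)⟩
    · refine tendsto_const_nhds.congr' ?_
      have hk : ∀ᶠ n : ℕ in Filter.atTop, ∀ k, X ω k - x₀ k ≤ n :=
        Filter.eventually_all.2 fun k =>
          tendsto_natCast_atTop_atTop.eventually_ge_atTop (X ω k - x₀ k)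
      filter_upwards [hk] with n hn
      refine (max_eq_right (h.mono fun k => ?_)).symm
      have := hn k
      simp only [Pi.sub_apply, m]
      linarith
  have h0 : ∫ _, f x₀ ∂P < 0 := by simpa using hx₀
  obtain ⟨n, hn⟩ := (hlim.eventually (gt_mem_nhds h0)).exists
  refine ⟨m n, le_trans (integral_mono (h.integrable_shift _)
    ((h.integrable_shift (m n)).sup (integrable_const (f x₀))) fun ω => ?_) hn.le⟩
  exact le_max_left _ _

theorem mem_acceptSet_iff (h : Heart P f c X) (m : Fin d → ℝ) :
    m ∈ acceptSet (fun x => (f x : EReal)) P X ↔ ∫ ω, f (X ω - m) ∂P ≤ 0 := by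
  show eexp P (fun ω => ((f (X ω - m) : ℝ) : EReal)) ≤ 0 ↔ _
  rw [eexp_coe (h.integrable_shift m)]
  exact EReal.coe_nonpos

theorem sum_ge (h : Heart P f c X) {m : Fin d → ℝ} (hm : ∫ ω, f (X ω - m) ∂P ≤ 0) :
    ∫ ω, ∑ k, X ω k ∂P - c ≤ ∑ k, m k := by
  have h1 : ∫ ω, (∑ k, X ω k - (∑ k, m k + c)) ∂P ≤ ∫ ω, f (X ω - m) ∂P := by
    refine integral_mono (h.integrable_sum.sub (integrable_const _)) (h.integrable_shift m)
      fun ω => ?_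
    have := h.lower_bound (X ω - m)
    simp only [Pi.sub_apply, Finset.sum_sub_distrib] at this
    show ∑ k, X ω k - (∑ k, m k + c) ≤ f (X ω - m)
    linarith
  rw [integral_sub h.integrable_sum (integrable_const _)] at h1
  simp only [integral_const, probReal_univ, one_smul] at h1
  linarith

end Heart

theorem IsLossFunction.heart {Ω : Type*} [MeasurableSpace Ω] {P : Measure Ω}
    [IsProbabilityMeasure P] {d : ℕ} {f : (Fin d → ℝ) → ℝ} {c : ℝ}
    (hf : IsLossFunction (fun x => (f x : EReal)) c) {X : Ω → Fin d → ℝ}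
    (hX : MemOrliczHeart (fun x => (f x : EReal)) P X) : Heart P f c X := by
  have hlb : ∀ x, ∑ k, x k - c ≤ f x := fun x => by
    have := hf.lower_bound x
    exact_mod_cast this
  have hmf : Measurable f := by
    simpa using hf.lsc.measurable.ereal_toReal
  have habs : ∀ x : Fin d → ℝ, -c ≤ f |x| := fun x => by
    have h1 := hlb |x|
    have h2 : 0 ≤ ∑ k, |x| k := Finset.sum_nonneg fun k _ => abs_nonneg (x k)
    linarith
  have hma : Measurable (fun x : Fin d → ℝ => |x|) :=
    measurable_pi_lambda _ fun k => (continuous_abs.measurable).comp (measurable_pi_apply k)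
  exact
    { mono := fun x y hxy => EReal.coe_le_coe_iff.1 (hf.mono hxy)
      convex := fun x y => by
        have := hf.convex x y (1 / 2) (1 / 2) (by norm_num) (by norm_num) (by norm_num)
        simp only [← EReal.coe_mul, ← EReal.coe_add] at this
        exact EReal.coe_le_coe_iff.1 this
      lower_bound := hlb
      measurable_f := hmf
      measurable_X := hX.1
      integrable_abs := fun lam hlam =>
        integrable_of_eexp_lt_top (hmf.comp (hma.comp (hX.1.const_smul lam)))
          (fun ω => habs _) (hX.2 lam hlam) }

/-- Proposition 3.9 (supermodular case): if `ℓ` is finite-valued and supermodular and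
`X` dominates `Y` in the supermodular order, then `A(X) ⊆ A(Y)` and `R(Y) ≤ R(X)`. -/
theorem shortfallRisk_supermodular_monotone
    {Ω : Type*} [MeasurableSpace Ω] (P : Measure Ω) [IsProbabilityMeasure P]
    {d : ℕ} (ℓ : (Fin d → ℝ) → EReal) (c : ℝ) (hℓ : IsLossFunction ℓ c)
    (hfin : ∀ x : Fin d → ℝ, ℓ x ≠ ⊤)
    (hsm : ∀ x y : Fin d → ℝ, ℓ x + ℓ y ≤ ℓ (x ⊔ y) + ℓ (x ⊓ y))
    (X Y : Ω → Fin d → ℝ) (hX : MemOrliczHeart ℓ P X) (hY : MemOrliczHeart ℓ P Y)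
    (hord : ∀ f : (Fin d → ℝ) → ℝ,
      (∀ x y : Fin d → ℝ, f x + f y ≤ f (x ⊔ y) + f (x ⊓ y)) →
      Integrable (fun ω => f (X ω)) P → Integrable (fun ω => f (Y ω)) P →
      ∫ ω, f (Y ω) ∂P ≤ ∫ ω, f (X ω) ∂P) :
    acceptSet ℓ P X ⊆ acceptSet ℓ P Y ∧
      shortfallRisk ℓ P Y ≤ shortfallRisk ℓ P X := by
  -- Replace `ℓ` by its real-valued version.
  obtain ⟨f, rfl⟩ : ∃ f : (Fin d → ℝ) → ℝ, ℓ = fun x => (f x : EReal) := by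
    refine ⟨fun x => (ℓ x).toReal, funext fun x => (EReal.coe_toReal (hfin x) ?_).symm⟩
    have h := hℓ.lower_bound x
    rw [← EReal.coe_sub] at h
    exact ((EReal.bot_lt_coe _).trans_le h).ne'
  have hHX := hℓ.heart hX
  have hHY := hℓ.heart hY
  have hsub : acceptSet (fun x => (f x : EReal)) P X ⊆ acceptSet (fun x => (f x : EReal)) P Y := by
    intro m hm
    rw [hHX.mem_acceptSet_iff] at hm
    rw [hHY.mem_acceptSet_iff]
    refine (hord (fun x => f (x - m)) (fun x y => ?_) (hHX.integrable_shift m)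
      (hHY.integrable_shift m)).trans hm
    have h := hsm (x - m) (y - m)
    rw [← sup_sub, ← inf_sub] at h
    simp only [← EReal.coe_add] at h
    exact EReal.coe_le_coe_iff.1 h
  refine ⟨hsub, csInf_le_csInf ?_ ?_ ?_⟩
  · refine ⟨∫ ω, ∑ k, Y ω k ∂P - c, ?_⟩
    rintro s ⟨m, hm, rfl⟩
    exact hHY.sum_ge ((hHY.mem_acceptSet_iff m).1 hm)
  · obtain ⟨x₀, hx₀⟩ := iInf_lt_iff.1 hℓ.inf_lt_zero
    obtain ⟨m, hm⟩ := hHX.exists_integral_nonpos (x₀ := x₀) (by exact_mod_cast hx₀)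
    exact ⟨_, m, (hHX.mem_acceptSet_iff m).2 hm, rfl⟩
  · rintro s ⟨m, hm, rfl⟩
    exact ⟨m, hsub hm, rfl⟩
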